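/- Let (u_k)_{k≥1} be the sequence of real numbers defined by u_1 = 5/2 and, for k ≥ 1, u_{k+1} = u_k · [ (ℓ² − 2ℓ)(4ℓ² − 1) ] / [ (ℓ² − 1)(4ℓ² − 8ℓ + 3) ] where ℓ = 2k + 2. Then every u_k is strictly positive and the series ∑_{k≥1} u_k diverges. -/

import Mathlib

/-!
The recurrence ratio equals `1 - 3 / ((ℓ² - 1)(2ℓ - 3))`, so it differs from `1` only by a term of
order `ℓ⁻³` and the `u k` stay away from `0`. Quantitatively, for `ℓ = 2k + 2` the ratio is at least
`1 - 4 / ℓ² = 1 - 1 / (k + 1)²`, and the product of these lower bounds telescopes to a quantity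
larger than `1 / 2`. Hence `u k ≥ u 1 / 2 > 0`, and the terms of the series do not tend to `0`.
-/

lemma one_sub_one_div_sq_mul_one_add_one_div {K : Type*} [Field K] {x : K}
    (hx : x ≠ 0) (hx_succ : x + 1 ≠ 0) :
    (1 - 1 / (x + 1) ^ 2) * (1 + 1 / x) = 1 + 1 / (x + 1) := by
  field_simp
  ring

lemma one_add_one_div_mul_half_le_of_one_sub_one_div_sq_mul_le {K : Type*} [Field K]
    [LinearOrder K] [IsStrictOrderedRing K] {u : ℕ → K}
    (hu : ∀ k : ℕ, 1 ≤ k → (1 - 1 / ((k : K) + 1) ^ 2) * u k ≤ u (k + 1)) {k : ℕ} (hk : 1 ≤ k) :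
    (1 + 1 / (k : K)) * (u 1 / 2) ≤ u k := by
  induction k, hk using Nat.le_induction with
  | base => exact le_of_eq (by push_cast; ring)
  | succ k hk ih =>
    have hk_pos : (0 : K) < k := by exact_mod_cast hk
    have hfactor_nonneg : 0 ≤ 1 - 1 / ((k : K) + 1) ^ 2 :=
      sub_nonneg.2 <| div_le_one_of_le₀ (one_le_pow₀ (by linarith)) (by positivity)
    calc (1 + 1 / ((k + 1 : ℕ) : K)) * (u 1 / 2)
        = (1 - 1 / ((k : K) + 1) ^ 2) * ((1 + 1 / (k : K)) * (u 1 / 2)) := by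
          rw [← mul_assoc, Nat.cast_succ,
            one_sub_one_div_sq_mul_one_add_one_div hk_pos.ne' (by positivity)]
      _ ≤ (1 - 1 / ((k : K) + 1) ^ 2) * u k := mul_le_mul_of_nonneg_left ih hfactor_nonneg
      _ ≤ u (k + 1) := hu k hk

/-- The ratio `|C_{ℓ-1}|² / |C_ℓ|²` of the coefficients `C_ℓ = i √(ℓ² - 1) / √(4ℓ² - 1)` of the
representation `ρ₁₀`, as a rational function of a real variable `ℓ`. It is the ratio of consecutive
terms of the sequence `|x_{ℓ,0}|²` over even `ℓ`. -/
noncomputable def preimageRatio (ℓ : ℝ) : ℝ :=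
  ((ℓ ^ 2 - 2 * ℓ) * (4 * ℓ ^ 2 - 1)) / ((ℓ ^ 2 - 1) * (4 * ℓ ^ 2 - 8 * ℓ + 3))

lemma preimageRatio_eq_one_sub {ℓ : ℝ} (hℓ : 3 / 2 < ℓ) :
    preimageRatio ℓ = 1 - 3 / ((ℓ ^ 2 - 1) * (2 * ℓ - 3)) := by
  have hsq : ℓ ^ 2 - 1 ≠ 0 := by nlinarith
  have hthree : 2 * ℓ - 3 ≠ 0 := by linarith
  have hone : 2 * ℓ - 1 ≠ 0 := by linarith
  have hfactor : 4 * ℓ ^ 2 - 8 * ℓ + 3 = (2 * ℓ - 1) * (2 * ℓ - 3) := by ring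
  have hdefect_ne : (ℓ ^ 2 - 1) * (2 * ℓ - 3) ≠ 0 := mul_ne_zero hsq hthree
  have hdenom_ne : (ℓ ^ 2 - 1) * ((2 * ℓ - 1) * (2 * ℓ - 3)) ≠ 0 :=
    mul_ne_zero hsq (mul_ne_zero hone hthree)
  rw [preimageRatio, hfactor, one_sub_div hdefect_ne, div_eq_div_iff hdenom_ne hdefect_ne]
  ring

lemma one_sub_four_div_sq_le_preimageRatio {ℓ : ℝ} (hℓ : 2 ≤ ℓ) :
    1 - 4 / ℓ ^ 2 ≤ preimageRatio ℓ := by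
  have hsq : 4 ≤ ℓ ^ 2 := by nlinarith
  have hlin : 1 ≤ 2 * ℓ - 3 := by linarith
  have hdefect : 3 / ((ℓ ^ 2 - 1) * (2 * ℓ - 3)) ≤ 4 / ℓ ^ 2 :=
    calc 3 / ((ℓ ^ 2 - 1) * (2 * ℓ - 3))
        ≤ 3 / (ℓ ^ 2 - 1) :=
          div_le_div_of_nonneg_left (by norm_num) (by linarith)
            (le_mul_of_one_le_right (by linarith) hlin)
      _ ≤ 4 / ℓ ^ 2 := by
          rw [div_le_div_iff₀ (by linarith) (by linarith)]
          linarith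
  rw [preimageRatio_eq_one_sub (by linarith)]
  exact sub_le_sub_left hdefect 1

lemma preimageRatio_pos {ℓ : ℝ} (hℓ : 2 < ℓ) : 0 < preimageRatio ℓ := by
  have hsq : 4 < ℓ ^ 2 := by nlinarith
  have hbound_pos : 0 < 1 - 4 / ℓ ^ 2 := sub_pos.2 ((div_lt_one (by linarith)).2 hsq)
  exact hbound_pos.trans_le (one_sub_four_div_sq_le_preimageRatio hℓ.le)

lemma one_sub_one_div_succ_sq_le_preimageRatio {x : ℝ} (hx : 0 ≤ x) :
    1 - 1 / (x + 1) ^ 2 ≤ preimageRatio (2 * x + 2) := by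
  have hrescale : 1 / (x + 1) ^ 2 = 4 / (2 * x + 2) ^ 2 := by
    field_simp
    ring
  rw [hrescale]
  exact one_sub_four_div_sq_le_preimageRatio (by linarith)

lemma pos_of_succ_eq_mul_preimageRatio {u : ℕ → ℝ} (h1 : 0 < u 1)
    (hrec : ∀ k : ℕ, 1 ≤ k → u (k + 1) = u k * preimageRatio (2 * (k : ℝ) + 2))
    {k : ℕ} (hk : 1 ≤ k) : 0 < u k := by
  induction k, hk using Nat.le_induction with
  | base => exact h1
  | succ k hk ih =>
    have hk_pos : (0 : ℝ) < k := by exact_mod_cast hk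
    rw [hrec k hk]
    exact mul_pos ih (preimageRatio_pos (by linarith))

lemma half_le_of_succ_eq_mul_preimageRatio {u : ℕ → ℝ} (h1 : 0 < u 1)
    (hrec : ∀ k : ℕ, 1 ≤ k → u (k + 1) = u k * preimageRatio (2 * (k : ℝ) + 2))
    {k : ℕ} (hk : 1 ≤ k) : u 1 / 2 ≤ u k := by
  have hstep (j : ℕ) (hj : 1 ≤ j) : (1 - 1 / ((j : ℝ) + 1) ^ 2) * u j ≤ u (j + 1) := by
    rw [hrec j hj, mul_comm (u j)]
    exact mul_le_mul_of_nonneg_right (one_sub_one_div_succ_sq_le_preimageRatio j.cast_nonneg)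
      (pos_of_succ_eq_mul_preimageRatio h1 hrec hj).le
  calc u 1 / 2 ≤ (1 + 1 / (k : ℝ)) * (u 1 / 2) :=
        le_mul_of_one_le_left (by positivity) (le_add_of_nonneg_right (by positivity))
    _ ≤ u k := one_add_one_div_mul_half_le_of_one_sub_one_div_sq_mul_le hstep hk

theorem diverge_preimage_coefficients_general {u : ℕ → ℝ} (h1 : 0 < u 1)
    (hrec : ∀ k : ℕ, 1 ≤ k → u (k + 1) = u k * preimageRatio (2 * (k : ℝ) + 2)) :
    (∀ k : ℕ, 1 ≤ k → 0 < u k) ∧ ¬ Summable (fun k : ℕ => u (k + 1)) := by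
  refine ⟨fun k hk => pos_of_succ_eq_mul_preimageRatio h1 hrec hk, fun hsum => ?_⟩
  have hlimit : u 1 / 2 ≤ 0 := ge_of_tendsto' hsum.tendsto_atTop_zero fun k =>
    half_le_of_succ_eq_mul_preimageRatio h1 hrec k.succ_pos
  linarith

/-- The sequence `u k = |x_{2k,0}|²` of squared coefficients of a putative preimage of
`ξ₁₁` under `ρ₁₀(F₊)`: `u 1 = 5/2` and, for `k ≥ 1`,
`u (k+1) = u k * ((ℓ²-2ℓ)(4ℓ²-1)) / ((ℓ²-1)(4ℓ²-8ℓ+3))` with `ℓ = 2k+2`.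
Every `u k` (for `k ≥ 1`) is strictly positive and the series `∑_{k ≥ 1} u k` diverges. -/
theorem diverge_preimage_coefficients (u : ℕ → ℝ) (h1 : u 1 = 5 / 2)
    (hrec : ∀ k : ℕ, 1 ≤ k →
      u (k + 1) = u k *
        (((2 * (k : ℝ) + 2) ^ 2 - 2 * (2 * (k : ℝ) + 2)) *
            (4 * (2 * (k : ℝ) + 2) ^ 2 - 1)) /
          (((2 * (k : ℝ) + 2) ^ 2 - 1) *
            (4 * (2 * (k : ℝ) + 2) ^ 2 - 8 * (2 * (k : ℝ) + 2) + 3))) :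
    (∀ k : ℕ, 1 ≤ k → 0 < u k) ∧ ¬ Summable (fun k : ℕ => u (k + 1)) := by
  exact diverge_preimage_coefficients_general (by norm_num [h1]) fun k hk =>
    (hrec k hk).trans (mul_div_assoc _ _ _)
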